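/- arXiv:0709.2429 — 2 statements merged into one kernel-verified Lean document; each statement's English description precedes it below -/
import Mathlib

section
/- Let G = (Spin(n) × ℂ×)/K with K = {(1,1),(−1,−1)}, p : G → SO(n) the map [A,c] ↦ Ad_A, and ε : G → End(ℂᵏ) the restriction of an irreducible representation ρ of the complex Clifford algebra Cₙ^c (k = 2^⌊n/2⌋). If G' is a group with homomorphism p' : G' → SO(n) and representation ε' : G' → GL(ℂᵏ) satisfying ρ(p'(g)y) = ε'(g)∘ρ(y)∘ε'(g)⁻¹ for all y and g, then there exists a unique group homomorphism f : G' → G with p' = p ∘ f and ε' = ε ∘ f. -/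
open CliffordAlgebra

/-- The negative definite quadratic form `-⟨x,x⟩` on `ℝⁿ`, so that
`CliffordAlgebra (negEuclideanForm n)` is the Clifford algebra `Cₙ = Cl(ℝⁿ, -⟨,⟩)`. -/
noncomputable def negEuclideanForm (n : ℕ) : QuadraticForm ℝ (Fin n → ℝ) :=
  -(QuadraticMap.weightedSumSquares ℝ (fun _ : Fin n => (1 : ℝ)))

/-- The complexified Clifford algebra `Cₙᶜ = Cₙ ⊗ ℂ`. -/
abbrev ComplexClifford (n : ℕ) : Type :=
  TensorProduct ℝ ℂ (CliffordAlgebra (negEuclideanForm n))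

/-- The natural inclusion `Cₙ → Cₙᶜ`. -/
noncomputable def inclC (n : ℕ) :
    CliffordAlgebra (negEuclideanForm n) →ₐ[ℝ] ComplexClifford n :=
  Algebra.TensorProduct.includeRight

/-- The special orthogonal group `SO(n)`, as the subgroup of orthogonal `n × n` real
matrices of determinant `1`. -/
def SOGroup (n : ℕ) : Subgroup (Matrix.unitaryGroup (Fin n) ℝ) :=
  MonoidHom.ker (Matrix.detMonoidHom.comp (Submonoid.subtype _))

/-- The underlying matrix of an element of `SO(n)`. -/
def SOGroup.matrix {n : ℕ} (B : SOGroup n) : Matrix (Fin n) (Fin n) ℝ :=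
  ((B : Matrix.unitaryGroup (Fin n) ℝ) : Matrix (Fin n) (Fin n) ℝ)

/-- The group `G = (Spin(n) × ℂ×)/K`, where `K` is the two-element subgroup generated
by `(-1, -1)`; here `m ∈ Spin(n)` is the element whose image in the Clifford algebra
is `-1` (it is central, so the subgroup it generates with `-1 ∈ ℂ×` is normal). -/
abbrev SpinC (n : ℕ) (m : spinGroup (negEuclideanForm n)) :=
  (spinGroup (negEuclideanForm n) × ℂˣ) ⧸ Subgroup.normalClosure {(m, (-1 : ℂˣ))}

open scoped InnerProductSpace

theorem superComm_eq_contract {M : Type*} [AddCommGroup M] [Module ℝ M] (Q : QuadraticForm ℝ M)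
    (v : M) (x : CliffordAlgebra Q) :
    ι Q v * x - involute x * ι Q v = contractLeft (QuadraticMap.polarBilin Q v) x := by
  induction x using CliffordAlgebra.left_induction with
  | algebraMap r =>
    rw [AlgHom.commutes, contractLeft_algebraMap, Algebra.commutes, sub_self]
  | add x y hx hy => rw [map_add, map_add, ← hx, ← hy]; noncomm_ring
  | ι_mul y w hy =>
    rw [contractLeft_ι_mul, ← hy, map_mul, involute_ι, QuadraticMap.polarBilin_apply_apply,
      Algebra.smul_def, ← ι_mul_ι_add_swap]
    noncomm_ring

/-- The Euler (degree) operator on the exterior algebra. -/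
noncomputable def eulerOp (n : ℕ) :
    ExteriorAlgebra ℝ (Fin n → ℝ) →ₗ[ℝ] ExteriorAlgebra ℝ (Fin n → ℝ) :=
  ∑ i : Fin n, (LinearMap.mulLeft ℝ (ExteriorAlgebra.ι ℝ (Pi.single i (1 : ℝ)))).comp
    (contractLeft (Q := (0 : QuadraticForm ℝ (Fin n → ℝ))) (LinearMap.proj i))

theorem eulerOp_ι_mul (n : ℕ) (v : Fin n → ℝ) (x : ExteriorAlgebra ℝ (Fin n → ℝ)) :
    eulerOp n (ExteriorAlgebra.ι ℝ v * x)
      = ExteriorAlgebra.ι ℝ v * x + ExteriorAlgebra.ι ℝ v * eulerOp n x := by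
  have hsw : ∀ w : Fin n → ℝ, ExteriorAlgebra.ι ℝ w * ExteriorAlgebra.ι ℝ v
      = - (ExteriorAlgebra.ι ℝ v * ExteriorAlgebra.ι ℝ w) := fun w =>
    eq_neg_of_add_eq_zero_left (ExteriorAlgebra.ι_add_mul_swap w v)
  have hv : ExteriorAlgebra.ι ℝ v
      = ∑ i : Fin n, v i • ExteriorAlgebra.ι ℝ (Pi.single i (1 : ℝ)) := by
    conv_lhs => rw [pi_eq_sum_univ' v]
    simp only [map_sum, map_smul]
  simp only [eulerOp, LinearMap.sum_apply, LinearMap.comp_apply, LinearMap.mulLeft_apply]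
  have : ∀ i : Fin n, ExteriorAlgebra.ι ℝ (Pi.single i (1 : ℝ)) *
      contractLeft (Q := (0 : QuadraticForm ℝ (Fin n → ℝ))) (LinearMap.proj i)
        (ExteriorAlgebra.ι ℝ v * x) =
      (v i • ExteriorAlgebra.ι ℝ (Pi.single i (1 : ℝ))) * x + ExteriorAlgebra.ι ℝ v *
        (ExteriorAlgebra.ι ℝ (Pi.single i (1 : ℝ)) *
      contractLeft (Q := (0 : QuadraticForm ℝ (Fin n → ℝ))) (LinearMap.proj i) x) := by
    intro i
    have h := contractLeft_ι_mul (Q := (0 : QuadraticForm ℝ (Fin n → ℝ))) (d := LinearMap.proj i) v x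
    erw [h]
    rw [mul_sub, ← mul_assoc, ← mul_assoc]
    erw [hsw]
    rw [neg_mul, sub_neg_eq_add, LinearMap.proj_apply, mul_smul_comm, smul_mul_assoc]
  rw [Finset.sum_congr rfl fun i _ => this i, Finset.sum_add_distrib, ← Finset.sum_mul, ← hv,
    ← Finset.mul_sum]

theorem eulerOp_homog (n i : ℕ) (x : ExteriorAlgebra ℝ (Fin n → ℝ))
    (hx : x ∈ ⋀[ℝ]^i (Fin n → ℝ)) : eulerOp n x = (i : ℝ) • x := by
  induction hx using Submodule.pow_induction_on_left' with
  | algebraMap r => 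
    simp only [eulerOp, LinearMap.sum_apply, LinearMap.comp_apply, Nat.cast_zero, zero_smul]
    refine Finset.sum_eq_zero fun i _ => ?_
    erw [contractLeft_algebraMap]
    simp
  | add x y i _ _ hx hy => rw [map_add, hx, hy, smul_add]
  | mem_mul m hm i x hx hxx =>
    obtain ⟨v, rfl⟩ := hm
    rw [eulerOp_ι_mul, hxx, mul_smul_comm]
    push_cast
    module

theorem scalar_of_eulerOp_eq_zero (n : ℕ) (x : ExteriorAlgebra ℝ (Fin n → ℝ))
    (hx : eulerOp n x = 0) : ∃ r : ℝ, x = algebraMap ℝ _ r := by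
  have key : ∀ y : ExteriorAlgebra ℝ (Fin n → ℝ), ∀ i : ℕ,
      ((DirectSum.decompose (fun i : ℕ ↦ ⋀[ℝ]^i (Fin n → ℝ)) (eulerOp n y) i : _) :
        ExteriorAlgebra ℝ (Fin n → ℝ))
      = (i : ℝ) • (DirectSum.decompose (fun i : ℕ ↦ ⋀[ℝ]^i (Fin n → ℝ)) y i :
        ExteriorAlgebra ℝ (Fin n → ℝ)) := by
    intro y i
    induction y using DirectSum.Decomposition.inductionOn (fun i : ℕ ↦ ⋀[ℝ]^i (Fin n → ℝ)) with
    | zero => simp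
    | @homogeneous j m =>
      rw [eulerOp_homog n j m m.2, DirectSum.decompose_smul, DirectSum.smul_apply, Submodule.coe_smul]
      by_cases h : i = j
      · subst h; rfl
      · rw [DirectSum.decompose_of_mem_ne (ℳ := fun i : ℕ ↦ ⋀[ℝ]^i (Fin n → ℝ)) m.2 (Ne.symm h)]; simp
    | add a b ha hb =>
      rw [map_add, DirectSum.decompose_add, DirectSum.decompose_add, DirectSum.add_apply,
        DirectSum.add_apply, Submodule.coe_add, Submodule.coe_add, ha, hb, smul_add]
  have hz : ∀ i : ℕ, i ≠ 0 → (DirectSum.decompose (fun i : ℕ ↦ ⋀[ℝ]^i (Fin n → ℝ)) x i :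
        ExteriorAlgebra ℝ (Fin n → ℝ)) = 0 := by
    intro i hi
    have h := key x i
    rw [hx] at h
    simp only [DirectSum.decompose_zero, DirectSum.zero_apply, Submodule.coe_zero] at h
    exact (smul_eq_zero.1 h.symm).resolve_left (by exact_mod_cast hi)
  have h0 : x = (DirectSum.decompose (fun i : ℕ ↦ ⋀[ℝ]^i (Fin n → ℝ)) x 0 :
        ExteriorAlgebra ℝ (Fin n → ℝ)) := by
    classical
    conv_lhs => rw [← DirectSum.sum_support_decompose (fun i : ℕ ↦ ⋀[ℝ]^i (Fin n → ℝ)) x]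
    refine Finset.sum_eq_single 0 (fun i _ hi => hz i hi) (fun h => ?_)
    simpa using h
  have hm := (DirectSum.decompose (fun i : ℕ ↦ ⋀[ℝ]^i (Fin n → ℝ)) x 0).2
  rw [← h0, ExteriorAlgebra.exteriorPower, pow_zero] at hm
  obtain ⟨r, hr⟩ := Submodule.mem_one.1 hm
  exact ⟨r, hr.symm⟩

theorem neg_polar (n : ℕ) (v w : Fin n → ℝ) :
    QuadraticMap.polar (negEuclideanForm n) v w = -2 * ∑ i, v i * w i := by
  simp only [QuadraticMap.polar, negEuclideanForm, neg_apply,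
    QuadraticMap.weightedSumSquares_apply, Pi.add_apply, smul_eq_mul, one_mul, Finset.mul_sum,
    ← Finset.sum_neg_distrib, ← Finset.sum_sub_distrib]
  exact Finset.sum_congr rfl fun i _ => by ring

theorem even_central_scalar (n : ℕ) (x : CliffordAlgebra (negEuclideanForm n))
    (he : involute x = x)
    (hc : ∀ v, ι (negEuclideanForm n) v * x = x * ι (negEuclideanForm n) v) :
    ∃ r : ℝ, x = algebraMap ℝ _ r := by
  have hd : ∀ i : Fin n, contractLeft (Q := negEuclideanForm n) (LinearMap.proj i) x = 0 := by
    intro i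
    have h := superComm_eq_contract (negEuclideanForm n) (Pi.single i (1 : ℝ)) x
    rw [he, hc, sub_self] at h
    have : QuadraticMap.polarBilin (negEuclideanForm n) (Pi.single i (1 : ℝ))
        = (-2 : ℝ) • (LinearMap.proj i : (Fin n → ℝ) →ₗ[ℝ] ℝ) := by
      refine LinearMap.ext fun w => ?_
      rw [QuadraticMap.polarBilin_apply_apply, neg_polar]
      simp [Pi.single_apply]
    rw [this, map_smul, LinearMap.smul_apply] at h
    exact (smul_eq_zero.1 h.symm).resolve_left (by norm_num)
  obtain ⟨r, hr⟩ := scalar_of_eulerOp_eq_zero n (equivExterior (negEuclideanForm n) x) (by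
    simp only [eulerOp, LinearMap.sum_apply, LinearMap.comp_apply]
    refine Finset.sum_eq_zero fun i _ => ?_
    have := changeForm_contractLeft (changeForm.associated_neg_proof (Q := negEuclideanForm n))
      (LinearMap.proj i) x
    rw [hd, map_zero] at this
    erw [← this]
    simp)
  refine ⟨r, (equivExterior (negEuclideanForm n)).injective ?_⟩
  rw [hr]
  exact (changeForm_algebraMap (changeForm.associated_neg_proof (Q := negEuclideanForm n)) r).symm

theorem ι_inj (n : ℕ) : Function.Injective (ι (negEuclideanForm n)) := by
  intro v w h
  have h2 := congrArg (equivExterior (negEuclideanForm n)) h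
  refine (ExteriorAlgebra.ι_leftInverse (R := ℝ) (M := Fin n → ℝ)).injective ?_
  have hh : ∀ u, equivExterior (negEuclideanForm n) (ι _ u) = ExteriorAlgebra.ι ℝ u := fun u =>
    changeForm_ι (changeForm.associated_neg_proof (Q := negEuclideanForm n)) u
  rw [← hh, ← hh, h2]

theorem schur (k : ℕ) (hk : 0 < k) {R : Type*} [Ring R] [Algebra ℂ R]
    (ρ : R →ₐ[ℂ] Module.End ℂ (Fin k → ℂ))
    (hirr : ∀ W : Submodule ℂ (Fin k → ℂ),
      (∀ (a : R), ∀ w ∈ W, ρ a w ∈ W) → W = ⊥ ∨ W = ⊤)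
    (T : Module.End ℂ (Fin k → ℂ)) (hT : ∀ a, T * ρ a = ρ a * T) : ∃ c : ℂ, T = c • 1 := by
  have : Nonempty (Fin k) := ⟨⟨0, hk⟩⟩
  obtain ⟨c, hc⟩ := Module.End.exists_eigenvalue T
  refine ⟨c, ?_⟩
  have := (hirr (Module.End.eigenspace T c) (by
    intro a w hw
    rw [Module.End.mem_eigenspace_iff] at hw ⊢
    have := LinearMap.congr_fun (hT a) w
    simp only [Module.End.mul_apply] at this
    rw [this, hw, map_smul])).resolve_left hc
  refine LinearMap.ext fun w => ?_
  have hw : w ∈ Module.End.eigenspace T c := this ▸ Submodule.mem_top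
  rw [Module.End.mem_eigenspace_iff] at hw
  simpa using hw

theorem neg_apply_eq (n : ℕ) (v : EuclideanSpace ℝ (Fin n)) :
    negEuclideanForm n v.ofLp = - ‖v‖ ^ 2 := by
  simp only [negEuclideanForm, neg_apply, QuadraticMap.weightedSumSquares_apply, smul_eq_mul,
    one_mul, EuclideanSpace.norm_sq_eq, Real.norm_eq_abs, sq_abs]
  congr 1
  exact Finset.sum_congr rfl fun i _ => by ring

theorem unit_mem_pin (n : ℕ) (u : EuclideanSpace ℝ (Fin n)) (hu : ‖u‖ = 1) :
    ι (negEuclideanForm n) u.ofLp ∈ pinGroup (negEuclideanForm n) := by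
  have hsq : ι (negEuclideanForm n) u.ofLp * ι (negEuclideanForm n) u.ofLp = -1 := by
    rw [ι_sq_scalar, neg_apply_eq, hu]; simp
  have hst : star (ι (negEuclideanForm n) u.ofLp) = - ι (negEuclideanForm n) u.ofLp := by
    simp [star_def]
  refine ⟨⟨⟨ι _ u.ofLp, - ι _ u.ofLp, by rw [mul_neg, hsq, neg_neg],
    by rw [neg_mul, hsq, neg_neg]⟩, Subgroup.subset_closure ⟨u.ofLp, rfl⟩, rfl⟩, ?_, ?_⟩
  · rw [hst, neg_mul, hsq, neg_neg]
  · rw [hst, mul_neg, hsq, neg_neg]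

/-- `A` is a lift of the isometry `φ` to the pin group, up to sign. -/
def LiftsTo (n : ℕ) (φ : EuclideanSpace ℝ (Fin n) ≃ₗᵢ[ℝ] EuclideanSpace ℝ (Fin n)) : Prop :=
  ∃ A ∈ pinGroup (negEuclideanForm n), ∃ s : ℤˣ, ∃ e : ZMod 2,
    (s = 1 → e = 0) ∧ (s = -1 → e = 1) ∧ A ∈ evenOdd (negEuclideanForm n) e ∧
    LinearMap.det (φ.toLinearEquiv : EuclideanSpace ℝ (Fin n) →ₗ[ℝ] EuclideanSpace ℝ (Fin n))
      = ((s : ℤ) : ℝ) ∧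
    ∀ v : EuclideanSpace ℝ (Fin n), A * ι (negEuclideanForm n) v.ofLp * star A
      = ((s : ℤ) : ℝ) • ι (negEuclideanForm n) (φ v).ofLp

theorem liftsTo_one (n : ℕ) : LiftsTo n 1 := by
  refine ⟨1, one_mem _, 1, 0, by simp, by decide, ?_, ?_, ?_⟩
  · exact SetLike.one_mem_graded _
  · simp only [Units.val_one, Int.cast_one]
    exact LinearMap.det_id
  · intro v; simp

theorem liftsTo_mul (n : ℕ) (φ ψ : EuclideanSpace ℝ (Fin n) ≃ₗᵢ[ℝ] EuclideanSpace ℝ (Fin n))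
    (h1 : LiftsTo n φ) (h2 : LiftsTo n ψ) : LiftsTo n (φ * ψ) := by
  obtain ⟨A, hA, s, e, hs1, hs2, hAe, hdA, hcA⟩ := h1
  obtain ⟨B, hB, t, f, ht1, ht2, hBf, hdB, hcB⟩ := h2
  refine ⟨A * B, mul_mem hA hB, s * t, e + f, ?_, ?_, SetLike.mul_mem_graded hAe hBf, ?_, ?_⟩
  · rcases Int.units_eq_one_or s with rfl | rfl <;> rcases Int.units_eq_one_or t with rfl | rfl <;>
      simp_all <;> decide
  · rcases Int.units_eq_one_or s with rfl | rfl <;> rcases Int.units_eq_one_or t with rfl | rfl <;>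
      simp_all
  · push_cast
    rw [← hdA, ← hdB, ← LinearMap.det_comp]
    rfl
  · intro v
    rw [star_mul]
    calc A * B * ι _ v.ofLp * (star B * star A) = A * (B * ι _ v.ofLp * star B) * star A := by
          noncomm_ring
      _ = _ := by
        rw [hcB, mul_smul_comm, smul_mul_assoc, hcA, smul_smul]
        push_cast
        rw [mul_comm]
        rfl

theorem liftsTo_reflection (n : ℕ) (w : EuclideanSpace ℝ (Fin n)) :
    LiftsTo n (Submodule.reflection (Submodule.span ℝ {w})ᗮ) := by
  by_cases hw : w = 0
  · subst hw
    have : Submodule.reflection (Submodule.span ℝ {(0 : EuclideanSpace ℝ (Fin n))})ᗮ = 1 := by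
      ext v : 1
      rw [Submodule.reflection_orthogonal_apply, Submodule.reflection_singleton_apply]
      simp
    rw [this]
    exact liftsTo_one n
  obtain ⟨u, hu, hspan⟩ : ∃ u : EuclideanSpace ℝ (Fin n), ‖u‖ = 1 ∧
      Submodule.span ℝ {w} = Submodule.span ℝ {u} := by
    have hn : ‖w‖⁻¹ ≠ 0 := inv_ne_zero (norm_ne_zero_iff.2 hw)
    refine ⟨‖w‖⁻¹ • w, norm_smul_inv_norm hw, ?_⟩
    exact (Submodule.span_singleton_smul_eq (IsUnit.mk0 _ hn) w).symm
  simp only [hspan]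
  have hu0 : u ≠ 0 := by rintro rfl; simp at hu
  have hsq : ι (negEuclideanForm n) u.ofLp * ι (negEuclideanForm n) u.ofLp = -1 := by
    rw [ι_sq_scalar, neg_apply_eq, hu]; simp
  have hst : star (ι (negEuclideanForm n) u.ofLp) = - ι (negEuclideanForm n) u.ofLp := by
    simp [star_def]
  refine ⟨ι _ u.ofLp, unit_mem_pin n u hu, -1, 1, by decide, by simp, ι_mem_evenOdd_one _ _, ?_, ?_⟩
  · have := Submodule.det_reflection (Submodule.span ℝ {u})ᗮ
    rw [Submodule.orthogonal_orthogonal, finrank_span_singleton hu0] at this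
    simpa using this
  · intro v
    rw [Submodule.reflection_orthogonal_apply, Submodule.reflection_singleton_apply, hst, hu]
    have hp := ι_mul_ι_add_swap (Q := negEuclideanForm n) u.ofLp v.ofLp
    have hin : inner ℝ u v = ∑ i, u.ofLp i * v.ofLp i := by
      rw [PiLp.inner_apply]
      exact Finset.sum_congr rfl fun i _ => by simp [mul_comm]
    rw [neg_polar, ← hin] at hp
    have h2 : ι (negEuclideanForm n) u.ofLp * ι (negEuclideanForm n) v.ofLp =
      algebraMap ℝ _ (-2 * inner ℝ u v) - ι (negEuclideanForm n) v.ofLp * ι _ u.ofLp :=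
      eq_sub_of_add_eq hp
    rw [h2, mul_neg, sub_mul, mul_assoc, hsq, ← Algebra.smul_def]
    simp only [WithLp.ofLp_neg, WithLp.ofLp_sub, WithLp.ofLp_smul, map_neg, map_sub, map_smul,
      map_nsmul, Units.val_neg, Units.val_one, Int.cast_neg, Int.cast_one]
    simp only [RCLike.ofReal_real_eq_id, id, one_pow, div_one, mul_neg, mul_one]
    module

theorem liftsTo_all (n : ℕ) (φ : EuclideanSpace ℝ (Fin n) ≃ₗᵢ[ℝ] EuclideanSpace ℝ (Fin n)) :
    LiftsTo n φ := by
  obtain ⟨l, -, rfl⟩ := φ.reflections_generate_dim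
  induction l with
  | nil => exact liftsTo_one n
  | cons w l ih =>
    rw [List.map_cons, List.prod_cons]
    exact liftsTo_mul n _ _ (liftsTo_reflection n w) ih

theorem spin_surj (n : ℕ) (g : SOGroup n) : ∃ A : spinGroup (negEuclideanForm n),
    ∀ v : Fin n → ℝ, ι (negEuclideanForm n) ((SOGroup.matrix g).mulVec v)
      = (A : CliffordAlgebra (negEuclideanForm n)) * ι (negEuclideanForm n) v
        * ((A⁻¹ : spinGroup (negEuclideanForm n)) : CliffordAlgebra (negEuclideanForm n)) := by
  have hdet : (SOGroup.matrix g).det = 1 := g.2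
  have huni : (SOGroup.matrix g).transpose * (SOGroup.matrix g) = 1 := (Matrix.mem_unitaryGroup_iff'.1 g.1.2)
  let L : EuclideanSpace ℝ (Fin n) →ₗ[ℝ] EuclideanSpace ℝ (Fin n) := Matrix.toEuclideanLin (SOGroup.matrix g)
  have hL : ∀ v, (L v).ofLp = (SOGroup.matrix g).mulVec v.ofLp := fun v => rfl
  have hnorm : ∀ v, ‖L v‖ = ‖v‖ := by
    intro v
    have h : ‖L v‖ ^ 2 = ‖v‖ ^ 2 := by
      have e : ∀ x : EuclideanSpace ℝ (Fin n), ‖x‖ ^ 2 = x.ofLp ⬝ᵥ x.ofLp := by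
        intro x
        rw [EuclideanSpace.norm_sq_eq]
        exact Finset.sum_congr rfl fun i _ => by rw [Real.norm_eq_abs, sq_abs, sq]
      rw [e, e, hL, Matrix.dotProduct_mulVec, Matrix.vecMul_mulVec, huni, Matrix.vecMul_one]
    exact (pow_left_inj₀ (norm_nonneg _) (norm_nonneg _) two_ne_zero).1 h
  let φ : EuclideanSpace ℝ (Fin n) ≃ₗᵢ[ℝ] EuclideanSpace ℝ (Fin n) :=
    LinearIsometry.toLinearIsometryEquiv ⟨L, hnorm⟩ rfl
  have hφ : ∀ v, φ v = L v := fun v => rfl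
  obtain ⟨A, hA, s, e, hs1, hs2, hAe, hd, hc⟩ := liftsTo_all n φ
  have hdL : LinearMap.det (φ.toLinearEquiv :
      EuclideanSpace ℝ (Fin n) →ₗ[ℝ] EuclideanSpace ℝ (Fin n)) = 1 := by
    have : (φ.toLinearEquiv :
      EuclideanSpace ℝ (Fin n) →ₗ[ℝ] EuclideanSpace ℝ (Fin n)) = L := rfl
    rw [this, ← hdet]
    change LinearMap.det (Matrix.toEuclideanLin (SOGroup.matrix g)) = _
    rw [Matrix.toEuclideanLin_eq_toLin_orthonormal, LinearMap.det_toLin]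
  have hs : s = 1 := by
    rcases Int.units_eq_one_or s with h | h
    · exact h
    · rw [hdL, h] at hd; norm_num at hd
  subst hs
  rw [hs1 rfl] at hAe
  refine ⟨⟨A, hA, hAe⟩, fun v => ?_⟩
  have := hc (WithLp.toLp 2 v)
  rw [hφ, hL] at this
  simp only [Units.val_one, Int.cast_one, one_smul] at this
  exact this.symm

theorem commutes_of_generators (n k : ℕ)
    (ρ : ComplexClifford n →ₐ[ℂ] Module.End ℂ (Fin k → ℂ)) (T : Module.End ℂ (Fin k → ℂ))
    (hT : ∀ v, T * ρ (inclC n (ι (negEuclideanForm n) v))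
      = ρ (inclC n (ι (negEuclideanForm n) v)) * T) (a : ComplexClifford n) :
    T * ρ a = ρ a * T := by
  have h1 : ∀ x, T * ρ (inclC n x) = ρ (inclC n x) * T := by
    intro x
    induction x using CliffordAlgebra.induction with
    | algebraMap r =>
      have : inclC n (algebraMap ℝ _ r) = algebraMap ℂ (ComplexClifford n) (r : ℂ) := by
        rw [AlgHom.commutes]
        rfl
      rw [this, AlgHom.commutes]
      exact (Algebra.commutes _ _).symm
    | ι v => exact hT v
    | mul x y hx hy =>
      rw [map_mul, map_mul, ← mul_assoc, hx, mul_assoc, hy, mul_assoc]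
    | add x y hx hy => rw [map_add, map_add, mul_add, add_mul, hx, hy]
  induction a using TensorProduct.induction_on with
  | zero => simp
  | tmul z x =>
    have : (TensorProduct.tmul ℝ z x : ComplexClifford n) = z • inclC n x := by
      simp [inclC, TensorProduct.smul_tmul']
    rw [this, map_smul, mul_smul_comm, smul_mul_assoc, h1]
  | add x y hx hy => rw [map_add, mul_add, add_mul, hx, hy]

/-- The universal property of `G = (Spin(n) × ℂ×)/K` (main theorem, part (2)): given
an irreducible representation `ρ` of the complexified Clifford algebra `Cₙᶜ` on `ℂᵏ`
(`k = 2^⌊n/2⌋`), with `p : G → SO(n)`, `[A,c] ↦ Ad_A`, and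
`ε : G → End(ℂᵏ)`, `[A,c] ↦ c·ρ(A)`: any group `G'` with `p' : G' → SO(n)` and a
representation `ε' : G' → GL(ℂᵏ)` satisfying the equivariance condition
`ρ(p'(g)y) = ε'(g)∘ρ(y)∘ε'(g)⁻¹` factors uniquely through `G`, i.e. there is a unique
homomorphism `f : G' → G` with `p' = p ∘ f` and `ε' = ε ∘ f`. -/
theorem stmt_12 (n k : ℕ) (hk : k = 2 ^ (n / 2))
    (m : spinGroup (negEuclideanForm n))
    (hm : ((m : CliffordAlgebra (negEuclideanForm n))) = -1)
    (ρ : ComplexClifford n →ₐ[ℂ] Module.End ℂ (Fin k → ℂ))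
    (hirr : ∀ W : Submodule ℂ (Fin k → ℂ),
      (∀ (a : ComplexClifford n), ∀ w ∈ W, ρ a w ∈ W) → W = ⊥ ∨ W = ⊤)
    (act : SOGroup n →* (ComplexClifford n ≃ₐ[ℂ] ComplexClifford n))
    (hact : ∀ (B : SOGroup n) (v : Fin n → ℝ),
      act B (inclC n (ι (negEuclideanForm n) v))
        = inclC n (ι (negEuclideanForm n) ((SOGroup.matrix B).mulVec v)))
    (p : SpinC n m →* SOGroup n)
    (hp : ∀ (A : spinGroup (negEuclideanForm n)) (c : ℂˣ) (v : Fin n → ℝ),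
      ι (negEuclideanForm n) ((SOGroup.matrix (p (QuotientGroup.mk (A, c)))).mulVec v)
        = (A : CliffordAlgebra (negEuclideanForm n)) * ι (negEuclideanForm n) v
            * ((A⁻¹ : spinGroup (negEuclideanForm n)) : CliffordAlgebra (negEuclideanForm n)))
    (ε : SpinC n m →* (Module.End ℂ (Fin k → ℂ))ˣ)
    (hε : ∀ (A : spinGroup (negEuclideanForm n)) (c : ℂˣ),
      ((ε (QuotientGroup.mk (A, c)) : (Module.End ℂ (Fin k → ℂ))ˣ) : Module.End ℂ (Fin k → ℂ))
        = (c : ℂ) • ρ (inclC n (A : CliffordAlgebra (negEuclideanForm n))))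
    (G' : Type) [Group G'] (p' : G' →* SOGroup n)
    (ε' : G' →* (Module.End ℂ (Fin k → ℂ))ˣ)
    (hequiv : ∀ (g : G') (y : ComplexClifford n),
      ρ (act (p' g) y) = ↑(ε' g) * ρ y * ↑(ε' g)⁻¹) :
    ∃! f : G' →* SpinC n m, p' = p.comp f ∧ ε' = ε.comp f := by
  have hk0 : 0 < k := by rw [hk]; positivity
  have : Nonempty (Fin k) := ⟨⟨0, hk0⟩⟩
  -- existence of a lift of each element
  have hex : ∀ g : G', ∃ h : SpinC n m, p h = p' g ∧ ε h = ε' g := by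
    intro g
    obtain ⟨A, hA⟩ := spin_surj n (p' g)
    have hAi : ((A⁻¹ : spinGroup (negEuclideanForm n)) : CliffordAlgebra (negEuclideanForm n)) *
        (A : CliffordAlgebra (negEuclideanForm n)) = 1 := spinGroup.coe_star_mul_self A
    have hAi' : (A : CliffordAlgebra (negEuclideanForm n)) *
        ((A⁻¹ : spinGroup (negEuclideanForm n)) : CliffordAlgebra (negEuclideanForm n)) = 1 :=
      spinGroup.coe_mul_star_self A
    set a : Module.End ℂ (Fin k → ℂ) := ρ (inclC n A) with ha
    set b : Module.End ℂ (Fin k → ℂ) := ρ (inclC n (A⁻¹ : spinGroup (negEuclideanForm n))) with hb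
    have hba : b * a = 1 := by rw [ha, hb, ← map_mul, ← map_mul, hAi, map_one, map_one]
    have hab : a * b = 1 := by rw [ha, hb, ← map_mul, ← map_mul, hAi', map_one, map_one]
    obtain ⟨c, hc⟩ := schur k hk0 ρ hirr (b * ↑(ε' g)) (commutes_of_generators n k ρ _ (by
      intro v
      have h := hequiv g (inclC n (ι (negEuclideanForm n) v))
      rw [hact, hA, map_mul, map_mul, map_mul, map_mul, ← ha, ← hb] at h
      have h2 := congrArg (fun t => b * t * (↑(ε' g) : Module.End ℂ (Fin k → ℂ))) h
      simp only [mul_assoc, Units.inv_mul, mul_one] at h2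
      rw [← mul_assoc b a, hba, one_mul] at h2
      rw [mul_assoc, ← h2]))
    have hεa : (↑(ε' g) : Module.End ℂ (Fin k → ℂ)) = c • a := by
      have := congrArg (fun t => a * t) hc
      simp only [← mul_assoc, hab, one_mul] at this
      rw [this, mul_smul_comm, mul_one]
    have hc0 : c ≠ 0 := by
      rintro rfl
      rw [zero_smul] at hεa
      exact (ε' g).ne_zero hεa
    refine ⟨QuotientGroup.mk (A, Units.mk0 c hc0), ?_, ?_⟩
    · apply Subtype.ext
      apply Subtype.ext
      apply Matrix.ext_of_mulVec_single
      intro i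
      apply ι_inj n
      exact (hp _ _ _).trans (hA _).symm
    · apply Units.ext
      rw [hε, hεa]
      rfl
  -- uniqueness: `p` and `ε` are jointly injective
  have hker : ∀ h : SpinC n m, p h = 1 → ε h = 1 → h = 1 := by
    intro h
    induction h using QuotientGroup.induction_on with
    | H z =>
    obtain ⟨A, c⟩ := z
    intro h1 h2
    have hAi : ((A⁻¹ : spinGroup (negEuclideanForm n)) : CliffordAlgebra (negEuclideanForm n)) *
        (A : CliffordAlgebra (negEuclideanForm n)) = 1 := spinGroup.coe_star_mul_self A
    obtain ⟨r, hr⟩ := even_central_scalar n A (spinGroup.involute_eq A.2) (by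
      intro v
      have h := hp A c v
      rw [h1] at h
      have h3 : Matrix.mulVec (SOGroup.matrix (1 : SOGroup n)) v = v := Matrix.one_mulVec v
      rw [h3] at h
      conv_lhs => rw [h]
      rw [mul_assoc, hAi, mul_one])
    have hA2 : (A : CliffordAlgebra (negEuclideanForm n)) * star (A : CliffordAlgebra _) = 1 :=
      spinGroup.coe_mul_star_self A
    have hr2 : r * r = 1 := by
      rw [hr, star_algebraMap, ← map_mul] at hA2
      have h5 := congrArg (equivExterior (negEuclideanForm n)) hA2
      have h6 := changeForm_algebraMap
        (changeForm.associated_neg_proof (Q := negEuclideanForm n)) (r * r)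
      have h7 := changeForm_one (changeForm.associated_neg_proof (Q := negEuclideanForm n))
      have h8 : algebraMap ℝ (ExteriorAlgebra ℝ (Fin n → ℝ)) (r * r) = 1 :=
        h6.symm.trans (h5.trans h7)
      exact (ExteriorAlgebra.algebraMap_eq_one_iff _ _).1 h8
    have hcr : (c : ℂ) * (r : ℂ) = 1 := by
      have h3 := hε A c
      have h4 : inclC n (algebraMap ℝ _ r) = algebraMap ℂ (ComplexClifford n) (r : ℂ) := by
        rw [AlgHom.commutes]
        rfl
      rw [h2, hr, h4, AlgHom.commutes] at h3
      have h5 := congrFun (LinearMap.congr_fun h3 (fun _ => 1)) ⟨0, hk0⟩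
      simpa using h5.symm
    rcases mul_self_eq_one_iff.1 hr2 with rfl | rfl
    · have hA1 : A = 1 := Subtype.ext (by rw [hr, map_one]; rfl)
      have hc1 : c = 1 := Units.ext (by simpa using hcr)
      rw [hA1, hc1]
      rfl
    · have hA1 : A = m := Subtype.ext (by rw [hr, hm, map_neg, map_one])
      have hc1 : c = -1 := Units.ext (by
        have : (c : ℂ) = -1 := by
          push_cast at hcr
          linear_combination -hcr
        simpa using this)
      rw [hA1, hc1]
      exact (QuotientGroup.eq_one_iff _).2 (Subgroup.subset_normalClosure rfl)
  have hinj : ∀ h h' : SpinC n m, p h = p h' → ε h = ε h' → h = h' := by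
    intro h h' h1 h2
    have := hker (h * h'⁻¹) (by rw [map_mul, map_inv, h1, mul_inv_cancel])
      (by rw [map_mul, map_inv, h2, mul_inv_cancel])
    exact mul_inv_eq_one.1 this
  choose f hf1 hf2 using hex
  refine ⟨⟨⟨f, ?_⟩, ?_⟩, ⟨?_, ?_⟩, ?_⟩
  · apply hinj
    · rw [hf1, map_one, map_one]
    · rw [hf2, map_one, map_one]
  · intro x y
    apply hinj
    · change p (f (x * y)) = p (f x * f y)
      rw [map_mul, hf1, hf1, hf1, map_mul]
    · change ε (f (x * y)) = ε (f x * f y)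
      rw [map_mul, hf2, hf2, hf2, map_mul]
  · exact MonoidHom.ext fun g => (hf1 g).symm
  · exact MonoidHom.ext fun g => (hf2 g).symm
  · rintro f' ⟨h1, h2⟩
    refine MonoidHom.ext fun g => ?_
    apply hinj
    · exact (DFunLike.congr_fun h1 g).symm.trans (hf1 g).symm
    · exact (DFunLike.congr_fun h2 g).symm.trans (hf2 g).symm
end

section
/- Any continuous linear operator D on the Schwartz space S(ℝⁿ) that commutes with multiplication by xⱼ and with ∂/∂xⱼ for all j = 1,…,n is a complex scalar multiple of the identity. -/
open SchwartzMap MeasureTheory Topology in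
theorem aux_hasFDerivAt {E V : Type} [NormedAddCommGroup E] [NormedSpace ℝ E]
    [NormedAddCommGroup V] [NormedSpace ℝ V] (a : E) (F : SchwartzMap E V) (m : ℕ) (x : E) :
    HasFDerivAt (fun x => ∫ t in (0:ℝ)..1, t ^ m • F (a + t • (x - a)))
      (∫ t in (0:ℝ)..1, t ^ (m+1) • (fderivCLM ℝ E V F) (a + t • (x - a))) x := by
  have hc : ∀ x, Continuous fun t : ℝ => t ^ m • F (a + t • (x - a)) := fun x => by
    have := F.continuous
    fun_prop
  have hc' : ∀ x, Continuous fun t : ℝ =>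
      t ^ (m+1) • (fderivCLM ℝ E V F) (a + t • (x - a)) := fun x => by
    have := (fderivCLM ℝ E V F).continuous
    fun_prop
  refine intervalIntegral.hasFDerivAt_integral_of_dominated_of_fderiv_le (𝕜 := ℝ)
    (F := fun x t => t ^ m • F (a + t • (x - a)))
    (F' := fun x t => t ^ (m+1) • (fderivCLM ℝ E V F) (a + t • (x - a)))
    (s := Set.univ) (bound := fun _ => SchwartzMap.seminorm ℝ 0 0 (fderivCLM ℝ E V F))
    Filter.univ_mem ?_ ?_ ?_ ?_ ?_ ?_
  · exact Filter.Eventually.of_forall fun x => (hc x).aestronglyMeasurable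
  · exact (hc x).intervalIntegrable _ _
  · exact (hc' x).aestronglyMeasurable
  · refine Filter.Eventually.of_forall fun t ht x _ => ?_
    rw [Set.uIoc_of_le zero_le_one] at ht
    rw [norm_smul]
    have h1 : ‖t ^ (m+1)‖ ≤ 1 := by
      rw [Real.norm_of_nonneg (pow_nonneg ht.1.le _)]
      exact pow_le_one₀ ht.1.le ht.2
    have h2 := norm_le_seminorm ℝ (fderivCLM ℝ E V F) (a + t • (x - a))
    nlinarith [norm_nonneg ((fderivCLM ℝ E V F) (a + t • (x - a))), norm_nonneg (t ^ (m+1))]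
  · exact intervalIntegrable_const
  · refine Filter.Eventually.of_forall fun t ht x _ => ?_
    have h1 : HasFDerivAt (fun x : E => a + t • (x - a)) (t • ContinuousLinearMap.id ℝ E) x :=
      (((hasFDerivAt_id x).sub_const a).const_smul t).const_add a
    have h2 := ((F.hasFDerivAt (a + t • (x - a))).comp x h1).const_smul (t ^ m)
    refine HasFDerivAt.congr_fderiv (f := fun x => t ^ m • F (a + t • (x - a))) h2 ?_
    ext v
    simp [pow_succ, mul_smul]

open SchwartzMap MeasureTheory Topology in
theorem aux_bdd {E : Type} [NormedAddCommGroup E] [NormedSpace ℝ E] (a : E) (k : ℕ) :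
    ∀ {V : Type} [NormedAddCommGroup V] [NormedSpace ℝ V] (F : SchwartzMap E V) (m : ℕ),
    ContDiff ℝ k (fun x => ∫ t in (0:ℝ)..1, t ^ m • F (a + t • (x - a))) ∧
    ∃ C : ℝ, ∀ x, ‖iteratedFDeriv ℝ k
      (fun x => ∫ t in (0:ℝ)..1, t ^ m • F (a + t • (x - a))) x‖ ≤ C := by
  induction k with
  | zero =>
    intro V _ _ F m
    constructor
    · have : Differentiable ℝ (fun x => ∫ t in (0:ℝ)..1, t ^ m • F (a + t • (x - a))) :=
        fun x => (aux_hasFDerivAt a F m x).differentiableAt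
      exact_mod_cast contDiff_zero.2 this.continuous
    · refine ⟨SchwartzMap.seminorm ℝ 0 0 F * |1 - 0|, fun x => ?_⟩
      rw [norm_iteratedFDeriv_zero]
      refine intervalIntegral.norm_integral_le_of_norm_le_const fun t ht => ?_
      rw [Set.uIoc_of_le zero_le_one] at ht
      rw [norm_smul]
      have h1 : ‖t ^ m‖ ≤ 1 := by
        rw [Real.norm_of_nonneg (pow_nonneg ht.1.le _)]
        exact pow_le_one₀ ht.1.le ht.2
      have h2 := norm_le_seminorm ℝ F (a + t • (x - a))
      nlinarith [norm_nonneg (F (a + t • (x - a))), norm_nonneg (t ^ m)]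
  | succ k ih =>
    intro V _ _ F m
    obtain ⟨h1, C, h2⟩ := ih (fderivCLM ℝ E V F) (m+1)
    constructor
    · exact_mod_cast contDiff_succ_iff_hasFDerivAt.2 ⟨_, h1, aux_hasFDerivAt a F m⟩
    · refine ⟨C, fun x => ?_⟩
      rw [← norm_iteratedFDeriv_fderiv]
      have : fderiv ℝ (fun x => ∫ t in (0:ℝ)..1, t ^ m • F (a + t • (x - a))) =
        fun x => ∫ t in (0:ℝ)..1, t ^ (m+1) • (fderivCLM ℝ E V F) (a + t • (x - a)) :=
        funext fun x => (aux_hasFDerivAt a F m x).fderiv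
      rw [this]
      exact h2 x

theorem aux_temperate {E V : Type} [NormedAddCommGroup E] [NormedSpace ℝ E]
    [NormedAddCommGroup V] [NormedSpace ℝ V] (a : E) (F : SchwartzMap E V) :
    Function.HasTemperateGrowth (fun x => ∫ t in (0:ℝ)..1, F (a + t • (x - a))) := by
  have h := fun k => aux_bdd a k F 0
  simp only [pow_zero, one_smul] at h
  refine ⟨contDiff_infty.2 fun k => (h k).1, fun k => ?_⟩
  obtain ⟨C, hC⟩ := (h k).2
  exact ⟨0, C, by simpa using hC⟩

/-- Hadamard's lemma. -/
theorem aux_hadamard {n : ℕ} (f : SchwartzMap (EuclideanSpace ℝ (Fin n)) ℂ)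
    (p : Fin n → SchwartzMap (EuclideanSpace ℝ (Fin n)) ℂ)
    (hp : ∀ j x, p j x = fderiv ℝ f x (EuclideanSpace.single j 1))
    (a x : EuclideanSpace ℝ (Fin n)) :
    f x - f a = ∑ j, ((x j : ℂ) - a j) * ∫ t in (0:ℝ)..1, p j (a + t • (x - a)) := by
  have hd : ∀ t : ℝ, HasDerivAt (fun t : ℝ => f (a + t • (x - a)))
      (∑ j, ((x j : ℂ) - a j) * p j (a + t • (x - a))) t := by
    intro t
    have h1 : HasDerivAt (fun t : ℝ => a + t • (x - a)) (x - a) t := by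
      simpa using ((hasDerivAt_id t).smul_const (x - a)).const_add a
    have h2 := (f.hasFDerivAt (a + t • (x - a))).comp_hasDerivAt t h1
    have hs : x - a = ∑ j, (x j - a j) • EuclideanSpace.single j (1:ℝ) := by
      ext i
      simp [Finset.sum_apply, Pi.single_apply]
    have hL : ∀ L : EuclideanSpace ℝ (Fin n) →L[ℝ] ℂ, L (x - a) =
        ∑ j, (x j - a j) • L (EuclideanSpace.single j (1:ℝ)) := fun L => by
      conv_lhs => rw [hs]
      rw [map_sum]
      simp only [map_smul]
    refine HasDerivAt.congr_deriv (f := fun t : ℝ => f (a + t • (x - a))) h2 ?_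
    rw [hL]
    simp [hp]
  have hc : ∀ j, Continuous fun t : ℝ => ((x j : ℂ) - a j) * p j (a + t • (x - a)) := fun j => by
    have := (p j).continuous
    fun_prop
  have := intervalIntegral.integral_eq_sub_of_hasDerivAt (a := 0) (b := 1) (fun t _ => hd t)
    ((continuous_finsetSum _ fun j _ => hc j).intervalIntegrable _ _)
  simp only [one_smul, zero_smul, add_zero, add_sub_cancel] at this
  rw [← this, intervalIntegral.integral_finsetSum fun j _ => (hc j).intervalIntegrable _ _]
  simp

open SchwartzMap in
theorem aux_key {n : ℕ}
    (X P : Fin n →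
      (SchwartzMap (EuclideanSpace ℝ (Fin n)) ℂ →L[ℂ] SchwartzMap (EuclideanSpace ℝ (Fin n)) ℂ))
    (hX : ∀ (j : Fin n) (f : SchwartzMap (EuclideanSpace ℝ (Fin n)) ℂ)
      (x : EuclideanSpace ℝ (Fin n)), X j f x = (x j : ℂ) * f x)
    (hP : ∀ (j : Fin n) (f : SchwartzMap (EuclideanSpace ℝ (Fin n)) ℂ)
      (x : EuclideanSpace ℝ (Fin n)), P j f x = fderiv ℝ f x (EuclideanSpace.single j 1))
    (D : SchwartzMap (EuclideanSpace ℝ (Fin n)) ℂ →L[ℂ] SchwartzMap (EuclideanSpace ℝ (Fin n)) ℂ)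
    (hDX : ∀ j : Fin n, ∀ f, D (X j f) = X j (D f))
    (f G : SchwartzMap (EuclideanSpace ℝ (Fin n)) ℂ) (a : EuclideanSpace ℝ (Fin n)) :
    D (smulLeftCLM ℂ f G) a = f a * D G a := by
  set g : Fin n → EuclideanSpace ℝ (Fin n) → ℂ :=
    fun j x => ∫ t in (0:ℝ)..1, P j f (a + t • (x - a)) with hg
  have hgt : ∀ j, (g j).HasTemperateGrowth := fun j => aux_temperate a (P j f)
  have e : smulLeftCLM ℂ f G = f a • G +
      ∑ j, (X j (smulLeftCLM ℂ (g j) G) - (a j : ℂ) • smulLeftCLM ℂ (g j) G) := by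
    ext x
    have h := aux_hadamard f (fun j => P j f) (fun j x => hP j f x) a x
    rw [smulLeftCLM_apply_apply f.hasTemperateGrowth, smul_eq_mul,
      ← sub_add_cancel (f x) (f a), h]
    simp only [SchwartzMap.add_apply, SchwartzMap.sum_apply, SchwartzMap.sub_apply,
      SchwartzMap.smul_apply, hX, smulLeftCLM_apply_apply (hgt _), smul_eq_mul]
    rw [add_mul, add_comm, Finset.sum_mul]
    congr 1
    refine Finset.sum_congr rfl fun j _ => ?_
    simp only [hg]; ring
  rw [e]
  simp only [map_add, map_sum, map_sub, map_smul, hDX, SchwartzMap.add_apply,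
    SchwartzMap.sum_apply, SchwartzMap.sub_apply, SchwartzMap.smul_apply, hX, smul_eq_mul,
    sub_self, Finset.sum_const_zero, add_zero]

open SchwartzMap Topology in
/-- Schur-type lemma for the Schrödinger representation: any continuous linear operator
`D` on the Schwartz space `S(ℝⁿ)` commuting with multiplication by `xⱼ` and with
`∂/∂xⱼ` for all `j` is a complex scalar multiple of the identity. -/
theorem stmt_16 (n : ℕ)
    (X P : Fin n →
      (SchwartzMap (EuclideanSpace ℝ (Fin n)) ℂ →L[ℂ] SchwartzMap (EuclideanSpace ℝ (Fin n)) ℂ))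
    (hX : ∀ (j : Fin n) (f : SchwartzMap (EuclideanSpace ℝ (Fin n)) ℂ)
      (x : EuclideanSpace ℝ (Fin n)), X j f x = (x j : ℂ) * f x)
    (hP : ∀ (j : Fin n) (f : SchwartzMap (EuclideanSpace ℝ (Fin n)) ℂ)
      (x : EuclideanSpace ℝ (Fin n)), P j f x = fderiv ℝ f x (EuclideanSpace.single j 1))
    (D : SchwartzMap (EuclideanSpace ℝ (Fin n)) ℂ →L[ℂ] SchwartzMap (EuclideanSpace ℝ (Fin n)) ℂ)
    (hDX : ∀ j : Fin n, ∀ f, D (X j f) = X j (D f))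
    (hDP : ∀ j : Fin n, ∀ f, D (P j f) = P j (D f)) :
    ∃ c : ℂ, ∀ f : SchwartzMap (EuclideanSpace ℝ (Fin n)) ℂ, D f = c • f := by
  have hG : ∀ a : EuclideanSpace ℝ (Fin n), ∃ G : SchwartzMap (EuclideanSpace ℝ (Fin n)) ℂ,
      ∀ᶠ x in 𝓝 a, G x = 1 := by
    intro a
    let b : ContDiffBump a := ⟨1, 2, one_pos, one_lt_two⟩
    have h1 : HasCompactSupport (fun x => ((b x : ℝ) : ℂ)) :=
      b.hasCompactSupport.comp_left (g := fun r : ℝ => (r : ℂ)) (by simp)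
    have h2 : ContDiff ℝ (⊤ : ℕ∞) (fun x => ((b x : ℝ) : ℂ)) :=
      Complex.ofRealCLM.contDiff.comp b.contDiff
    refine ⟨h1.toSchwartzMap h2, ?_⟩
    filter_upwards [b.eventuallyEq_one] with x hx
    change ((b x : ℝ) : ℂ) = 1
    rw [hx]; simp
  choose G hG using hG
  have key : ∀ f H x, f x * D H x = H x * D f x := by
    intro f H x
    rw [← aux_key X P hX hP D hDX f H x, ← aux_key X P hX hP D hDX H f x]
    congr 2
    ext y
    rw [smulLeftCLM_apply_apply f.hasTemperateGrowth, smulLeftCLM_apply_apply H.hasTemperateGrowth]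
    simp [mul_comm]
  set c : EuclideanSpace ℝ (Fin n) → ℂ := fun a => D (G a) a with hc
  have hDf : ∀ f x, D f x = c x * f x := by
    intro f x
    have := key f (G x) x
    rw [(hG x).self_of_nhds, one_mul] at this
    rw [← this, mul_comm]
  have hloc : ∀ a, c =ᶠ[𝓝 a] D (G a) := by
    intro a
    filter_upwards [hG a] with x hx
    rw [hDf, hx, mul_one]
  have hcd : Differentiable ℝ c := fun a =>
    ((D (G a)).differentiableAt).congr_of_eventuallyEq (hloc a)
  have hc0 : ∀ a, fderiv ℝ c a = 0 := by
    intro a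
    rw [(hloc a).fderiv_eq]
    have hz : ∀ j, fderiv ℝ (D (G a)) a (EuclideanSpace.single j 1) = 0 := by
      intro j
      rw [← hP, ← hDP, hDf, hP]
      have : (G a : EuclideanSpace ℝ (Fin n) → ℂ) =ᶠ[𝓝 a] fun _ => 1 := hG a
      rw [this.fderiv_eq]
      simp
    ext v
    have hs : v = ∑ j, v j • EuclideanSpace.single j (1:ℝ) := by
      ext i
      simp [Finset.sum_apply, Pi.single_apply]
    rw [hs, map_sum]
    simp [hz]
  refine ⟨c 0, fun f => ?_⟩
  ext x
  rw [hDf, is_const_of_fderiv_eq_zero hcd hc0 x 0]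
  simp
end
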